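/- Let p ≥ 3 be an odd integer and set m = (p−1)/2. The map sending a pair (λ, T), where λ is a strict partition of n with largest part λ_1 ≤ (p+1)/2 and T is a standard tableau of shape the shifted Young diagram S(λ), to the content sequence of T, is a bijection onto the set of tuples i ∈ {0,1,…,m}^n that are splittable, satisfy i_1 = 0, and satisfy for each 2 ≤ k ≤ n that either i_k + 1 ∈ {i_1,…,i_{k−1}} or (i_k ≥ 1 and i_k − 1 ∈ {i_1,…,i_{k−1}}). -/

import Mathlib

/-- A strict partition: a strictly decreasing list of positive integers. -/
def StrictPartition (l : List ℕ) : Prop :=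
  l.Chain' (· > ·) ∧ ∀ x ∈ l, 0 < x

/-- The shifted Young diagram of a strict partition (0-indexed):
row `r` consists of the cells `(r, j)` with `r ≤ j < r + λ_r`. -/
def shiftedCells (l : List ℕ) : Set (ℕ × ℕ) :=
  {p : ℕ × ℕ | p.1 ≤ p.2 ∧ p.2 < p.1 + l.getD p.1 0}

/-- `D` is the cell set of a skew shifted Young diagram. -/
def IsSkewShifted (D : Set (ℕ × ℕ)) : Prop :=
  ∃ lam mu : List ℕ, StrictPartition lam ∧ StrictPartition mu ∧
    (∀ r, mu.getD r 0 ≤ lam.getD r 0) ∧ D = shiftedCells lam \ shiftedCells mu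

/-- A standard tableau of shape `D` with `n` cells: a bijection from `{1,…,n}`
(i.e. `Fin n`) onto `D` whose labels increase along rows and down columns. -/
def IsStandard {n : ℕ} (D : Set (ℕ × ℕ)) (T : Fin n → ℕ × ℕ) : Prop :=
  Function.Injective T ∧ Set.range T = D ∧
  (∀ k l : Fin n, (T l).1 = (T k).1 → (T l).2 = (T k).2 + 1 → k < l) ∧
  (∀ k l : Fin n, (T l).1 = (T k).1 + 1 → (T l).2 = (T k).2 → k < l)

/-- The content sequence of a tableau: the content `j − r` of the cell labeled `k`. -/
def contentSeq {n : ℕ} (T : Fin n → ℕ × ℕ) : Fin n → ℕ := fun k => (T k).2 - (T k).1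

/-- A tuple `i ∈ ℕ^n` is splittable if whenever `i k = i l` with `k < l`:
if the common value is `0` then `1` occurs strictly between, and if it is `≥ 1`
then both the value minus one and the value plus one occur strictly between. -/
def Splittable {n : ℕ} (i : Fin n → ℕ) : Prop :=
  ∀ k l : Fin n, k < l → i k = i l →
    (i k = 0 → ∃ a, k < a ∧ a < l ∧ i a = 1) ∧
    (1 ≤ i k → (∃ a, k < a ∧ a < l ∧ i a + 1 = i k) ∧ (∃ a, k < a ∧ a < l ∧ i a = i k + 1))

/-- `j` is obtained from `i` by one admissible simple transposition. -/
def AdmissibleSwap {n : ℕ} (i j : Fin n → ℕ) : Prop :=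
  ∃ (k : ℕ) (hk : k + 1 < n),
    i ⟨k, Nat.lt_of_succ_lt hk⟩ ≠ i ⟨k + 1, hk⟩ + 1 ∧
    i ⟨k + 1, hk⟩ ≠ i ⟨k, Nat.lt_of_succ_lt hk⟩ + 1 ∧
    j = i ∘ Equiv.swap ⟨k, Nat.lt_of_succ_lt hk⟩ ⟨k + 1, hk⟩

/-- Equivalence of tuples under finite chains of admissible transpositions. -/
def EquivTuples {n : ℕ} (i j : Fin n → ℕ) : Prop :=
  Relation.ReflTransGen AdmissibleSwap i j

lemma ex_count (P : ℕ → Prop) [DecidablePred P] (r n : ℕ) (h : r < Nat.count P n) :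
    ∃ k, k < n ∧ P k ∧ Nat.count P k = r := by
  induction n with
  | zero => simp at h
  | succ n ih =>
    rw [Nat.count_succ] at h
    by_cases hr : r < Nat.count P n
    · obtain ⟨k, h1, h2⟩ := ih hr
      exact ⟨k, by omega, h2⟩
    · split_ifs at h with hP
      · exact ⟨n, by omega, hP, by omega⟩
      · omega

lemma strict_step {l : List ℕ} (h : StrictPartition l) (r : ℕ) (hr : 0 < l.getD (r+1) 0) :
    l.getD (r+1) 0 < l.getD r 0 := by
  have hlen : r + 1 < l.length := by
    by_contra hc
    rw [List.getD_eq_default _ _ (by omega)] at hr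
    omega
  have := (List.isChain_iff_getElem.mp h.1) r hlen
  rw [List.getD_eq_getElem _ _ hlen, List.getD_eq_getElem _ _ (by omega)]
  exact this

lemma cell_nw {l : List ℕ} (h : StrictPartition l) (r j : ℕ) (hc : (r+1, j) ∈ shiftedCells l) :
    (r, j) ∈ shiftedCells l := by
  simp only [shiftedCells, Set.mem_setOf_eq] at *
  have := strict_step h r (by omega)
  omega

lemma cell_left {l : List ℕ} (r j : ℕ) (hc : (r, j+1) ∈ shiftedCells l) (hj : r ≤ j) :
    (r, j) ∈ shiftedCells l := by
  simp only [shiftedCells, Set.mem_setOf_eq] at *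
  omega

lemma getD_le {l : List ℕ} (h : StrictPartition l) (r : ℕ) : l.getD r 0 ≤ l.getD 0 0 := by
  induction r with
  | zero => rfl
  | succ r ih =>
    rcases Nat.eq_zero_or_pos (l.getD (r+1) 0) with h0 | h0
    · omega
    · have := strict_step h r h0
      omega

lemma cells_inj {l l' : List ℕ} (h : StrictPartition l) (h' : StrictPartition l')
    (e : shiftedCells l = shiftedCells l') : l = l' := by
  have hg : ∀ r, l.getD r 0 = l'.getD r 0 := by
    intro r
    have e1 : ∀ c, c < l.getD r 0 ↔ c < l'.getD r 0 := by
      intro c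
      have := Set.ext_iff.mp e (r, r + c)
      simp only [shiftedCells, Set.mem_setOf_eq] at this
      omega
    have a := e1 (l.getD r 0)
    have b := e1 (l'.getD r 0)
    omega
  have hpos : ∀ {l : List ℕ}, StrictPartition l → ∀ r, r < l.length ↔ 0 < l.getD r 0 := by
    intro l h r
    constructor
    · intro hr
      rw [List.getD_eq_getElem _ _ hr]
      exact h.2 _ (List.getElem_mem hr)
    · intro hr
      by_contra hc
      rw [List.getD_eq_default _ _ (by omega)] at hr
      omega
  have hlen : l.length = l'.length := by
    have a := hpos h l'.length
    have b := hpos h' l'.length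
    have c := hpos h l.length
    have d := hpos h' l.length
    rw [hg] at a c
    omega
  apply List.ext_getElem hlen
  intro r h1 h2
  have := hg r
  rwa [List.getD_eq_getElem _ _ h1, List.getD_eq_getElem _ _ h2] at this

section
variable {n : ℕ} {l : List ℕ} {T : Fin n → ℕ × ℕ}

lemma T_mem (hT : IsStandard (shiftedCells l) T) (k : Fin n) : T k ∈ shiftedCells l := by
  rw [← hT.2.1]; exact ⟨k, rfl⟩

lemma T_ex (hT : IsStandard (shiftedCells l) T) (q : ℕ × ℕ) (hq : q ∈ shiftedCells l) :
    ∃ k, T k = q := by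
  rw [← hT.2.1] at hq; exact hq

lemma T_right (hT : IsStandard (shiftedCells l) T) {k a : Fin n} {r j : ℕ}
    (hk : T k = (r, j)) (ha : T a = (r, j+1)) : k < a :=
  hT.2.2.1 k a (by rw [hk, ha]) (by rw [hk, ha])

lemma T_down (hT : IsStandard (shiftedCells l) T) {k a : Fin n} {r j : ℕ}
    (hk : T k = (r, j)) (ha : T a = (r+1, j)) : k < a :=
  hT.2.2.2 k a (by rw [hk, ha]) (by rw [hk, ha])

lemma T_diag (hl : StrictPartition l) (hT : IsStandard (shiftedCells l) T) {c : ℕ} (s : ℕ) :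
    ∀ (d : ℕ) {k a : Fin n}, T k = (s, s + c) → T a = (s+d, s+d+c) → k ≤ a := by
  intro d
  induction d with
  | zero => intro k a hk ha; exact le_of_eq (hT.1 (by rw [hk, ha]; rfl))
  | succ d ih =>
    intro k a hk ha
    have m0 := T_mem hT a
    rw [ha] at m0
    have e : s + (d+1) + c = s + d + c + 1 := by omega
    rw [e, ← add_assoc] at m0
    rw [e, ← add_assoc] at ha
    have m1 := cell_nw hl _ _ m0
    have m2 := cell_left _ _ m1 (by omega)
    obtain ⟨b, hb⟩ := T_ex hT _ m1
    obtain ⟨b', hb'⟩ := T_ex hT _ m2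
    have h1 := ih hk hb'
    have h2 := T_right hT hb' hb
    have h3 := T_down hT hb ha
    exact (h1.trans_lt (h2.trans h3)).le

lemma T_form (hT : IsStandard (shiftedCells l) T) (k : Fin n) :
    T k = ((T k).1, (T k).1 + contentSeq T k) := by
  have := (T_mem hT k).1
  unfold contentSeq
  ext
  · rfl
  · simp; omega

lemma T_diag_mem (hl : StrictPartition l) {c : ℕ} (s d : ℕ)
    (h : (s+d, s+d+c) ∈ shiftedCells l) : (s, s+c) ∈ shiftedCells l := by
  induction d with
  | zero => exact h
  | succ d ih =>
    apply ih
    have e : s + (d+1) + c = s + d + c + 1 := by omega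
    rw [e, ← add_assoc] at h
    exact cell_left _ _ (cell_nw hl _ _ h) (by omega)

lemma T_diag_lt (hl : StrictPartition l) (hT : IsStandard (shiftedCells l) T) {k a : Fin n}
    (h : contentSeq T k = contentSeq T a) : k < a ↔ (T k).1 < (T a).1 := by
  have hk := T_form hT k
  have ha := T_form hT a
  rw [h] at hk
  rcases lt_trichotomy (T k).1 (T a).1 with h1 | h1 | h1
  · simp only [h1, iff_true]
    obtain ⟨d, hd⟩ := Nat.exists_eq_add_of_le h1.le
    have : k ≤ a := T_diag hl hT (T k).1 d hk (by rw [← hd]; exact ha)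
    refine lt_of_le_of_ne this ?_
    rintro rfl
    omega
  · have : k = a := hT.1 (by rw [hk, ha, h1])
    subst this
    simp
  · obtain ⟨d, hd⟩ := Nat.exists_eq_add_of_le h1.le
    have : a ≤ k := T_diag hl hT (T a).1 d ha (by rw [← hd]; exact hk)
    constructor
    · intro h'; exact absurd h' (not_lt.mpr this)
    · intro; omega

lemma T_row (hl : StrictPartition l) (hT : IsStandard (shiftedCells l) T) (k : Fin n) :
    (T k).1 = (Finset.univ.filter
      (fun a => a < k ∧ contentSeq T a = contentSeq T k)).card := by
  conv_lhs => rw [← Finset.card_range (T k).1]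
  symm
  apply Finset.card_bij (fun a _ => (T a).1)
  · intro a ha
    simp only [Finset.mem_filter, Finset.mem_univ, true_and] at ha
    rw [Finset.mem_range]
    exact (T_diag_lt hl hT ha.2).mp ha.1
  · intro a ha b hb hab
    simp only [Finset.mem_filter, Finset.mem_univ, true_and] at ha hb
    apply hT.1
    rw [T_form hT a, T_form hT b, hab, ha.2, hb.2]
  · intro r hr
    rw [Finset.mem_range] at hr
    obtain ⟨d, hd⟩ := Nat.exists_eq_add_of_le hr.le
    have hm := T_mem hT k
    rw [T_form hT k, hd] at hm
    obtain ⟨a, ha⟩ := T_ex hT _ (T_diag_mem hl r d hm)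
    have hc : contentSeq T a = contentSeq T k := by
      simp [contentSeq, ha]
    refine ⟨a, ?_, by rw [ha]⟩
    simp only [Finset.mem_filter, Finset.mem_univ, true_and]
    refine ⟨(T_diag_lt hl hT hc).mpr ?_, hc⟩
    rw [ha]; exact hr

lemma T_unique {l' : List ℕ} {T' : Fin n → ℕ × ℕ} (hl : StrictPartition l)
    (hT : IsStandard (shiftedCells l) T) (hl' : StrictPartition l')
    (hT' : IsStandard (shiftedCells l') T') (h : contentSeq T = contentSeq T') :
    T = T' := by
  funext k
  rw [T_form hT k, T_form hT' k, T_row hl hT, T_row hl' hT', h]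

lemma T_split (hl : StrictPartition l) (hT : IsStandard (shiftedCells l) T) :
    Splittable (contentSeq T) := by
  intro k a hka h
  have hr := (T_diag_lt hl hT h).mp hka
  have hk := T_form hT k
  have ha := T_form hT a
  rw [← h] at ha
  set c := contentSeq T k with hc
  set r := (T k).1
  obtain ⟨d, hd⟩ := Nat.exists_eq_add_of_le (Nat.succ_le_of_lt hr)
  rw [hd] at ha
  have hm := T_mem hT a
  rw [ha] at hm
  have m1 := T_diag_mem hl (r+1) d hm
  obtain ⟨b, hb⟩ := T_ex hT _ m1
  have hba : b ≤ a := T_diag hl hT (r+1) d hb ha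
  have e : r + 1 + c = r + c + 1 := by omega
  rw [e] at hb m1
  obtain ⟨x, hx⟩ := T_ex hT _ (cell_nw hl _ _ m1)
  have x1 := T_right hT hk hx
  have x2 := T_down hT hx hb
  have x3 : contentSeq T x = c + 1 := by simp [contentSeq, hx]; omega
  refine ⟨fun h0 => ⟨x, x1, x2.trans_le hba, by omega⟩, fun h0 => ⟨?_, x, x1, x2.trans_le hba, x3⟩⟩
  obtain ⟨y, hy⟩ := T_ex hT _ (cell_left _ _ m1 (by omega))
  have y1 := T_down hT hk hy
  have y2 := T_right hT hy hb
  refine ⟨y, y1, y2.trans_le hba, ?_⟩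
  simp [contentSeq, hy]; omega

lemma T_prev (hl : StrictPartition l) (hT : IsStandard (shiftedCells l) T) (k : Fin n) :
    T k = (0,0) ∨ (∃ a, a < k ∧ contentSeq T a = contentSeq T k + 1 ∧ contentSeq T k = 0) ∨
      (1 ≤ contentSeq T k ∧ ∃ a, a < k ∧ contentSeq T a + 1 = contentSeq T k) := by
  have hk := T_form hT k
  set r := (T k).1
  have hm := T_mem hT k
  rw [hk] at hm
  rcases hc : contentSeq T k with _ | c
  · rw [hc] at hk hm
    rcases hr : r with _ | s
    · left; rw [hk, hr]
    · right; left
      rw [hr] at hk hm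
      obtain ⟨a, ha⟩ := T_ex hT _ (cell_nw hl _ _ hm)
      refine ⟨a, T_down hT ha hk, ?_, rfl⟩
      simp [contentSeq, ha]
  · right; right
    rw [hc, ← add_assoc] at hk hm
    obtain ⟨a, ha⟩ := T_ex hT _ (cell_left _ _ hm (by omega))
    refine ⟨by omega, a, T_right hT ha hk, ?_⟩
    simp [contentSeq, ha]
end

open Classical in
/-- number of occurrences of `c` among the first `k` entries -/
noncomputable def cntN {n : ℕ} (i : Fin n → ℕ) (c k : ℕ) : ℕ :=
  Nat.count (fun a => ∃ h : a < n, i ⟨a, h⟩ = c) k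

section
variable {n : ℕ} {i : Fin n → ℕ}

lemma cntN_mono (c : ℕ) {a b : ℕ} (h : a ≤ b) : cntN i c a ≤ cntN i c b :=
  Nat.count_monotone _ h

lemma cntN_self (k : Fin n) : cntN i (i k) (k+1) = cntN i (i k) k + 1 := by
  unfold cntN
  rw [Nat.count_succ, if_pos ⟨k.2, rfl⟩]

lemma cntN_ne (k : Fin n) {c : ℕ} (h : i k ≠ c) : cntN i c (k+1) = cntN i c k := by
  unfold cntN
  rw [Nat.count_succ, if_neg]
  · rfl
  · rintro ⟨_, h'⟩; exact h h'

lemma cntN_ex {c r t : ℕ} (h : r < cntN i c t) :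
    ∃ k : Fin n, k.val < t ∧ i k = c ∧ cntN i c k = r := by
  classical
  obtain ⟨k, h1, ⟨h2, h3⟩, h4⟩ := ex_count _ _ _ h
  exact ⟨⟨k, h2⟩, h1, h3, h4⟩

lemma cntN_lt (a : Fin n) {t s : ℕ} (h : s ≤ a) (h' : (a:ℕ) < t) :
    cntN i (i a) s + 1 ≤ cntN i (i a) t := by
  have h1 := cntN_mono (i := i) (i a) h
  have h2 := cntN_mono (i := i) (i a) (Nat.succ_le_of_lt h')
  have h3 := cntN_self (i := i) a
  simp only [Nat.succ_eq_add_one] at h2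
  omega

lemma inv (hs : Splittable i) (h0 : ∀ k : Fin n, k.val = 0 → i k = 0)
    (hn : ∀ k : Fin n, 1 ≤ k.val →
          (∃ a, a < k ∧ i a = i k + 1) ∨ (1 ≤ i k ∧ ∃ a, a < k ∧ i a + 1 = i k)) :
    ∀ t, t ≤ n → ∀ c, cntN i (c+1) t ≤ cntN i c t ∧ cntN i c t ≤ cntN i (c+1) t + 1 := by
  intro t
  induction t using Nat.strong_induction_on with
  | _ t ih =>
  intro ht
  rcases t with _ | k
  · intro c; simp [cntN]
  have ihk := ih k (by omega) (by omega)
  obtain ⟨K, hK⟩ : ∃ K : Fin n, K.val = k := ⟨⟨k, by omega⟩, rfl⟩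
  subst hK
  have key : cntN i (i K) K ≤ cntN i (i K + 1) K ∧
      ∀ c', i K = c' + 1 → cntN i (i K) K + 1 ≤ cntN i c' K := by
    rcases Nat.eq_zero_or_pos (cntN i (i K) K) with hz | hz
    · refine ⟨by omega, ?_⟩
      intro c' hc'
      have hK1 : 1 ≤ K.val := by
        by_contra hcon
        have := h0 K (by omega)
        omega
      rcases hn K hK1 with ⟨a, ha, hia⟩ | ⟨_, a, ha, hia⟩
      · have := cntN_lt (i := i) a (Nat.zero_le _) (show a.val < K.val from ha)
        rw [hia] at this
        have := (ihk (i K)).1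
        omega
      · have := cntN_lt (i := i) a (Nat.zero_le _) (show a.val < K.val from ha)
        have e : i a = c' := by omega
        rw [e] at this
        omega
    · obtain ⟨a, haK, hia, hca⟩ := cntN_ex (i := i) (c := i K) (r := cntN i (i K) K - 1) (t := K) (by omega)
      have hsa := hs a K haK hia
      have I := ih (a+1) (by omega) (by omega)
      have hself := cntN_self (i := i) a
      rw [hia] at hself
      constructor
      · have : ∃ b, a < b ∧ b < K ∧ i b = i K + 1 := by
          rcases Nat.eq_zero_or_pos (i a) with hz | hz
          · obtain ⟨b, hb⟩ := hsa.1 hz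
            exact ⟨b, hb.1, hb.2.1, by omega⟩
          · obtain ⟨b, hb⟩ := (hsa.2 hz).2
            exact ⟨b, hb.1, hb.2.1, by omega⟩
        obtain ⟨b, hb1, hb2, hb3⟩ := this
        have := cntN_lt (i := i) b (Nat.succ_le_of_lt (show a.val < b.val from hb1)) (show b.val < K.val from hb2)
        rw [hb3] at this
        have := (I (i K)).2
        simp only [Nat.succ_eq_add_one] at *
        clear hsa
        omega
      · intro c' hc'
        obtain ⟨b, hb1, hb2, hb3⟩ := (hsa.2 (by omega)).1
        have := cntN_lt (i := i) b (Nat.succ_le_of_lt (show a.val < b.val from hb1)) (show b.val < K.val from hb2)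
        have e : i b = c' := by omega
        rw [e] at this
        have := (I c').1
        rw [← hc'] at this
        simp only [Nat.succ_eq_add_one] at *
        omega
  intro c
  have hself := cntN_self (i := i) K
  have ic := ihk c
  by_cases h1 : i K = c
  · have h2 := cntN_ne (i := i) K (c := c+1) (by omega)
    rw [h1] at key hself
    omega
  · have h2 := cntN_ne (i := i) K h1
    by_cases h3 : i K = c + 1
    · have := key.2 c h3
      rw [h3] at this hself
      omega
    · have h4 := cntN_ne (i := i) K h3
      omega

lemma cntN_card (c : ℕ) : cntN i c n = (Finset.univ.filter (fun k => i k = c)).card := by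
  classical
  unfold cntN
  rw [Nat.count_eq_card_filter_range]
  symm
  apply Finset.card_bij (fun (a : Fin n) _ => a.val)
  · intro a ha
    simp only [Finset.mem_filter, Finset.mem_univ, true_and] at ha
    simp [ha]
  · intro a _ b _ h; exact Fin.ext h
  · intro b hb
    simp only [Finset.mem_filter, Finset.mem_range] at hb
    obtain ⟨_, h, hb⟩ := hb
    exact ⟨⟨b, h⟩, by simp [hb], rfl⟩

/-- row lengths -/
noncomputable def rowLen (i : Fin n → ℕ) (m r : ℕ) : ℕ :=
  ((Finset.range (m+1)).filter (fun c => r < cntN i c n)).card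

lemma rowLen_lt {m : ℕ} (hm : ∀ k, i k ≤ m) (hanti : ∀ c, cntN i (c+1) n ≤ cntN i c n)
    (r x : ℕ) : x < rowLen i m r ↔ r < cntN i x n := by
  have hanti' : Antitone (fun c => cntN i c n) := antitone_nat_of_succ_le hanti
  constructor
  · intro h
    by_contra hc
    have : (Finset.range (m+1)).filter (fun c => r < cntN i c n) ⊆ Finset.range x := by
      intro c hc'
      simp only [Finset.mem_filter, Finset.mem_range] at *
      by_contra hcx
      have : cntN i c n ≤ cntN i x n := hanti' (by omega : x ≤ c)
      omega
    have := Finset.card_le_card this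
    rw [Finset.card_range] at this
    unfold rowLen at h
    omega
  · intro h
    have hx : x ≤ m := by
      obtain ⟨k, _, hk, _⟩ := cntN_ex h
      rw [← hk]; exact hm k
    have : Finset.range (x+1) ⊆ (Finset.range (m+1)).filter (fun c => r < cntN i c n) := by
      intro c hc'
      simp only [Finset.mem_filter, Finset.mem_range] at *
      have : cntN i x n ≤ cntN i c n := hanti' (by omega : c ≤ x)
      omega
    have := Finset.card_le_card this
    rw [Finset.card_range] at this
    unfold rowLen
    omega

/-- the shape -/
noncomputable def shp (i : Fin n → ℕ) (m : ℕ) : List ℕ :=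
  (List.range (cntN i 0 n)).map (rowLen i m)

lemma shp_getD {m : ℕ} (hm : ∀ k, i k ≤ m) (hanti : ∀ c, cntN i (c+1) n ≤ cntN i c n) (r : ℕ) :
    (shp i m).getD r 0 = rowLen i m r := by
  by_cases h : r < cntN i 0 n
  · rw [List.getD_eq_getElem _ _ (by simpa [shp] using h)]
    simp [shp]
  · rw [List.getD_eq_default _ _ (by simpa [shp] using h)]
    have := rowLen_lt hm hanti r 0
    omega

lemma shp_strict {m : ℕ} (hm : ∀ k, i k ≤ m)
    (hinv : ∀ c, cntN i (c+1) n ≤ cntN i c n ∧ cntN i c n ≤ cntN i (c+1) n + 1) :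
    StrictPartition (shp i m) := by
  have hr := rowLen_lt hm (fun c => (hinv c).1)
  constructor
  · apply List.isChain_iff_getElem.mpr
    intro r h
    have h' : r + 1 < cntN i 0 n := by simpa [shp] using h
    simp only [shp, List.getElem_map, List.getElem_range]
    have h1 := (hr (r+1) 0).mpr h'
    have h2 := (hr (r+1) (rowLen i m (r+1) - 1)).mp (by omega)
    have h3 := (hinv (rowLen i m (r+1) - 1)).2
    rw [Nat.sub_add_cancel h1] at h3
    exact (hr r _).mpr (by omega)
  · intro x hx
    simp only [shp, List.mem_map, List.mem_range] at hx
    obtain ⟨r, h, rfl⟩ := hx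
    exact (hr r 0).mpr h

lemma shp_sum {m : ℕ} (hm : ∀ k, i k ≤ m) (hanti : ∀ c, cntN i (c+1) n ≤ cntN i c n) :
    (shp i m).sum = n := by
  have hanti' : Antitone (fun c => cntN i c n) := antitone_nat_of_succ_le hanti
  have e : (shp i m).sum = ∑ r ∈ Finset.range (cntN i 0 n), rowLen i m r := by
    rw [Finset.sum_range]
    simp [shp, ← List.sum_ofFn, List.ofFn_eq_map, ← List.map_coe_finRange_eq_range, Function.comp_def]
  rw [e]
  simp only [rowLen, Finset.card_filter]
  rw [Finset.sum_comm]
  have : ∀ c ∈ Finset.range (m+1), (∑ r ∈ Finset.range (cntN i 0 n), if r < cntN i c n then 1 else 0)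
      = (Finset.univ.filter (fun k => i k = c)).card := by
    intro c _
    rw [← cntN_card, ← Finset.card_filter]
    conv_rhs => rw [← Finset.card_range (cntN i c n)]
    congr 1
    ext r
    have : cntN i c n ≤ cntN i 0 n := hanti' (Nat.zero_le c)
    simp only [Finset.mem_filter, Finset.mem_range]
    omega
  rw [Finset.sum_congr rfl this, ← Finset.card_eq_sum_card_fiberwise]
  · simp
  · intro k _
    simp [Nat.lt_succ_iff, hm k]

/-- the tableau -/
noncomputable def tab (i : Fin n → ℕ) (k : Fin n) : ℕ × ℕ :=
  (cntN i (i k) k, cntN i (i k) k + i k)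

lemma tab_std {m : ℕ} (hm : ∀ k, i k ≤ m)
    (hinv : ∀ t, t ≤ n → ∀ c, cntN i (c+1) t ≤ cntN i c t ∧ cntN i c t ≤ cntN i (c+1) t + 1) :
    IsStandard (shiftedCells (shp i m)) (tab i) := by
  have hN := hinv n le_rfl
  have hr := rowLen_lt hm (fun c => (hN c).1)
  have hg := shp_getD hm (fun c => (hN c).1)
  refine ⟨?_, ?_, ?_, ?_⟩
  · intro k l h
    simp only [tab, Prod.mk.injEq] at h
    have hi : i k = i l := by omega
    rw [hi] at h
    rcases lt_trichotomy k l with h1 | h1 | h1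
    · have := cntN_lt (i := i) k le_rfl (show k.val < l.val from h1)
      rw [hi] at this
      omega
    · exact h1
    · have := cntN_lt (i := i) l le_rfl (show l.val < k.val from h1)
      omega
  · ext ⟨r, j⟩
    simp only [shiftedCells, Set.mem_range, Set.mem_setOf_eq, hg, tab, Prod.mk.injEq]
    constructor
    · rintro ⟨k, rfl, rfl⟩
      refine ⟨by omega, ?_⟩
      have := (hr (cntN i (i k) k) (i k)).mpr (cntN_lt k le_rfl k.2)
      omega
    · rintro ⟨h1, h2⟩
      obtain ⟨k, _, hk, hc⟩ := cntN_ex ((hr r (j-r)).mp (by omega))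
      refine ⟨k, ?_, ?_⟩ <;> rw [hk, hc]
      omega
  · intro k l h1 h2
    simp only [tab] at h1 h2
    have hi : i l = i k + 1 := by omega
    have a := (hinv (l+1) l.2 (i k)).1
    have b := cntN_self (i := i) l
    have c := cntN_ne (i := i) l (c := i k) (by omega)
    rw [hi] at b h1
    by_contra hcon
    have := cntN_mono (i := i) (i k) (show l.val ≤ k.val from not_lt.mp hcon)
    omega
  · intro k l h1 h2
    simp only [tab] at h1 h2
    have hi : i k = i l + 1 := by omega
    have a := (hinv (l+1) l.2 (i l)).2
    have b := cntN_self (i := i) l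
    have c := cntN_ne (i := i) l (c := i k) (by omega)
    by_contra hcon
    have := cntN_mono (i := i) (i k) (show l.val ≤ k.val from not_lt.mp hcon)
    rw [← hi] at a
    omega
end

/-- for odd `p ≥ 3` and `m = (p−1)/2`, pairs of a strict partition
of `n` with largest part at most `(p+1)/2` together with a standard tableau of
its shifted shape are in bijection, via the content sequence, with splittable
tuples in `{0,…,m}^n` with first entry `0` such that every later entry has a
neighbor (value `± 1`) among the earlier entries. -/
theorem shifted_tableau_content_bijection_mod_p (n p m : ℕ)
    (hp : p = 2 * m + 1) (h3 : 3 ≤ p) :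
    Set.BijOn (fun q : List ℕ × (Fin n → ℕ × ℕ) => contentSeq q.2)
      {q : List ℕ × (Fin n → ℕ × ℕ) |
        StrictPartition q.1 ∧ q.1.sum = n ∧ q.1.getD 0 0 ≤ (p + 1) / 2 ∧
          IsStandard (shiftedCells q.1) q.2}
      {i : Fin n → ℕ | (∀ k, i k ≤ m) ∧ Splittable i ∧
        (∀ k : Fin n, k.val = 0 → i k = 0) ∧
        ∀ k : Fin n, 1 ≤ k.val →
          (∃ a, a < k ∧ i a = i k + 1) ∨ (1 ≤ i k ∧ ∃ a, a < k ∧ i a + 1 = i k)} := by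
  refine ⟨?_, ?_, ?_⟩
  · rintro ⟨l, T⟩ ⟨hl, hsum, hle, hT⟩
    simp only at hl hsum hle hT
    refine ⟨?_, T_split hl hT, ?_, ?_⟩
    · intro k
      have h1 := T_mem hT k
      have h2 := getD_le hl (T k).1
      simp only [shiftedCells, Set.mem_setOf_eq] at h1
      simp only [contentSeq]
      omega
    · intro k hk
      rcases T_prev hl hT k with h | ⟨a, ha, _⟩ | ⟨_, a, ha, _⟩
      · simp [contentSeq, h]
      · have : a.val < k.val := ha
        omega
      · have : a.val < k.val := ha
        omega
    · intro k hk
      rcases T_prev hl hT k with h | ⟨a, ha, h, _⟩ | h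
      · exfalso
        rcases T_prev hl hT ⟨0, by omega⟩ with h' | ⟨a, ha, _⟩ | ⟨_, a, ha, _⟩
        · have := hT.1 (h.trans h'.symm)
          rw [this] at hk
          simp at hk
        · exact absurd (show a.val < 0 from ha) (by omega)
        · exact absurd (show a.val < 0 from ha) (by omega)
      · exact Or.inl ⟨a, ha, h⟩
      · exact Or.inr h
  · rintro ⟨l, T⟩ ⟨hl, _, _, hT⟩ ⟨l', T'⟩ ⟨hl', _, _, hT'⟩ h
    simp only at hl hT hl' hT' h
    have e := T_unique hl hT hl' hT' h
    subst e
    have : l = l' := cells_inj hl hl' (hT.2.1.symm.trans hT'.2.1)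
    rw [this]
  · rintro i ⟨hm, hs, h0, hn⟩
    have hinv := inv hs h0 hn
    have hN := hinv n le_rfl
    refine ⟨(shp i m, tab i), ⟨shp_strict hm hN, shp_sum hm (fun c => (hN c).1), ?_,
      tab_std hm hinv⟩, ?_⟩
    · simp only
      rw [shp_getD hm (fun c => (hN c).1)]
      have : rowLen i m 0 ≤ m + 1 := by
        unfold rowLen
        refine (Finset.card_filter_le _ _).trans ?_
        simp
      omega
    · funext k
      simp [contentSeq, tab]
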